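/- Let S be a real N×N symmetric matrix with zero diagonal such that I−S is invertible, and suppose (I−S)⁻¹ = U·diag(λ)·Uᵀ where U is orthogonal and λⱼ ≠ 0 for all j. Then for every index i, ∑ⱼ Uᵢⱼ²/λⱼ = 1. (Equivalently, the sign vector sign(λ) solves the binary linear system (U∘U)·diag(|λ|⁻¹)·q = 1.) -/

import Mathlib

open Matrix Finset

theorem stmt_1 {N : ℕ} (S U : Matrix (Fin N) (Fin N) ℝ) (l : Fin N → ℝ)
    (hSsym : Sᵀ = S) (hShollow : ∀ i, S i i = 0)
    (hInv : IsUnit (1 - S))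
    (hU : Uᵀ * U = 1)
    (hdecomp : (1 - S)⁻¹ = U * Matrix.diagonal l * Uᵀ)
    (hl : ∀ j, l j ≠ 0) :
    ∀ i, ∑ j, (U i j) ^ 2 / l j = 1 := by
  intro i
  have hU' : U * Uᵀ = 1 := mul_eq_one_comm.mp hU
  have hdet : IsUnit (1 - S).det := (Matrix.isUnit_iff_isUnit_det _).mp hInv
  have hd : Matrix.diagonal l * Matrix.diagonal (fun j => (l j)⁻¹) = 1 := by
    rw [Matrix.diagonal_mul_diagonal, ← Matrix.diagonal_one]
    congr 1
    funext j
    exact mul_inv_cancel₀ (hl j)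
  have h1 : (1 - S)⁻¹ * (U * Matrix.diagonal (fun j => (l j)⁻¹) * Uᵀ) = 1 := by
    rw [hdecomp]
    calc U * Matrix.diagonal l * Uᵀ * (U * Matrix.diagonal (fun j => (l j)⁻¹) * Uᵀ)
        = U * Matrix.diagonal l * (Uᵀ * U) * Matrix.diagonal (fun j => (l j)⁻¹) * Uᵀ := by
          simp only [Matrix.mul_assoc]
      _ = U * (Matrix.diagonal l * Matrix.diagonal (fun j => (l j)⁻¹)) * Uᵀ := by
          rw [hU, Matrix.mul_one, Matrix.mul_assoc U]
      _ = 1 := by rw [hd, Matrix.mul_one, hU']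
  have h2 : U * Matrix.diagonal (fun j => (l j)⁻¹) * Uᵀ = 1 - S := by
    have h3 := congrArg (fun M => (1 - S) * M) h1
    simpa only [← Matrix.mul_assoc, Matrix.mul_nonsing_inv _ hdet, Matrix.one_mul,
      Matrix.mul_one] using h3
  have h4 := congrFun (congrFun h2 i) i
  rw [Matrix.mul_apply] at h4
  simp only [Matrix.mul_diagonal, Matrix.transpose_apply, Matrix.sub_apply,
    Matrix.one_apply_eq, hShollow, sub_zero] at h4
  rw [← h4]
  refine Finset.sum_congr rfl fun j _ => ?_
  rw [div_eq_mul_inv]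
  ring
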